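/- For every natural number n ≥ 13, M(n) + p(n−7) + p(n−8) + p(n−10) ≤ p(n) + p(n−12) + p(n−13). -/

import Mathlib

/-- The product, with multiplicity, of the factorials of the elements of a multiset. -/
def factorialProd (A : Multiset ℕ) : ℕ := (A.map Nat.factorial).prod

/-- `M n`: the number of distinct multinomial coefficients with upper entry `n`, i.e. the
number of distinct values of `∏_{j ∈ λ} j!` as `λ` ranges over the partitions of `n`. -/
noncomputable def M (n : ℕ) : ℕ :=
  Set.ncard {v : ℕ | ∃ P : Nat.Partition n, factorialProd P.parts = v}

/-- `numPartitions n`: the number of partitions of `n`. -/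
noncomputable def numPartitions (n : ℕ) : ℕ := Fintype.card (Nat.Partition n)

/-!
The identities `3! 2! 2! = 4! 1! 1! 1!`, `5! 3! = 6! 1! 1!` and `6! 2! 2! = 5! 4! 1!` exchange
parts of a partition without changing its sum or its factorial product, and each creates new parts
equal to `1`. Among the partitions with a given factorial product, one with the most ones therefore
contains none of `{3,2,2}`, `{5,3}`, `{6,2,2}`, so `M n` is at most the number of partitions
avoiding all three. Partitions of `n` containing `s` correspond to partitions of `n - s.sum`, and
inclusion-exclusion gives the bound: a partition containing both `{5,3}` and `{6,2,2}` contains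
`{3,2,2}`, so the remaining pairwise and the triple intersection cancel.
-/

open Finset

theorem card_union_add_card_inter_add_card_inter {α : Type*} [DecidableEq α] {A B C : Finset α}
    (h : B ∩ C ⊆ A) :
    #(A ∪ B ∪ C) + #(A ∩ B) + #(A ∩ C) = #A + #B + #C := by
  have hinter : (A ∪ B) ∩ C = A ∩ C := by
    rw [union_inter_distrib_right, union_eq_left]
    exact subset_inter h inter_subset_right
  have hABC := card_union_add_card_inter (A ∪ B) C
  have hAB := card_union_add_card_inter A B
  rw [hinter] at hABC
  omega

theorem factorialProd_add (s t : Multiset ℕ) :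
    factorialProd (s + t) = factorialProd s * factorialProd t := by
  simp only [factorialProd, Multiset.map_add, Multiset.prod_add]

section ContainingParts

/-- The partition of `n` obtained from a partition of `m` by adjoining the positive parts `s`. -/
def adjoinParts {m n : ℕ} (s : Multiset ℕ) (hs : ∀ i ∈ s, 0 < i) (hsum : s.sum + m = n)
    (Q : Nat.Partition m) : Nat.Partition n where
  parts := s + Q.parts
  parts_pos hi := (Multiset.mem_add.1 hi).elim (hs _) Q.parts_pos
  parts_sum := by rw [Multiset.sum_add, Q.parts_sum, hsum]

/-- The partitions of `n` that contain the multiset `s` among their parts, with multiplicity. -/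
def partitionsContaining (n : ℕ) (s : Multiset ℕ) : Finset (Nat.Partition n) :=
  {P | s ≤ P.parts}

variable {m n : ℕ} {s t : Multiset ℕ}

theorem mem_partitionsContaining {P : Nat.Partition n} :
    P ∈ partitionsContaining n s ↔ s ≤ P.parts := by
  simp only [partitionsContaining, mem_filter_univ]

theorem partitionsContaining_inter :
    partitionsContaining n s ∩ partitionsContaining n t = partitionsContaining n (s ∪ t) := by
  ext P
  simp only [mem_inter, mem_partitionsContaining, Multiset.union_le_iff]

theorem partitionsContaining_anti (h : s ≤ t) :
    partitionsContaining n t ⊆ partitionsContaining n s := fun _ hP =>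
  mem_partitionsContaining.2 (h.trans (mem_partitionsContaining.1 hP))

theorem adjoinParts_injective (hs : ∀ i ∈ s, 0 < i) (hsum : s.sum + m = n) :
    Function.Injective (adjoinParts s hs hsum) := fun _ _ h =>
  Nat.Partition.ext (add_left_cancel (congrArg Nat.Partition.parts h))

theorem exists_adjoinParts_eq (hs : ∀ i ∈ s, 0 < i) (hsum : s.sum + m = n) {P : Nat.Partition n}
    (hP : s ≤ P.parts) : ∃ Q : Nat.Partition m, adjoinParts s hs hsum Q = P := by
  obtain ⟨u, hu⟩ := Multiset.le_iff_exists_add.1 hP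
  have hu_sum : u.sum = m := by
    have := P.parts_sum
    rw [hu, Multiset.sum_add] at this
    omega
  have hu_pos : ∀ {i}, i ∈ u → 0 < i := fun hi =>
    P.parts_pos (hu ▸ Multiset.mem_add.2 (Or.inr hi))
  exact ⟨⟨u, hu_pos, hu_sum⟩, Nat.Partition.ext hu.symm⟩

theorem image_adjoinParts (hs : ∀ i ∈ s, 0 < i) (hsum : s.sum + m = n) :
    univ.image (adjoinParts s hs hsum) = partitionsContaining n s := by
  ext P
  simp only [mem_image, mem_univ, true_and, mem_partitionsContaining]
  constructor
  · rintro ⟨Q, rfl⟩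
    exact Multiset.le_add_right s Q.parts
  · exact exists_adjoinParts_eq hs hsum

theorem card_partitionsContaining {k : ℕ} (hs : ∀ i ∈ s, 0 < i) (hsum : s.sum = k) (hk : k ≤ n) :
    #(partitionsContaining n s) = numPartitions (n - k) := by
  have hadd : s.sum + (n - k) = n := by omega
  rw [← image_adjoinParts hs hadd, card_image_of_injective _ (adjoinParts_injective hs hadd),
    card_univ, numPartitions]

end ContainingParts

section OneIncreasable

/-- A multiset is one-increasable if some multiset of positive integers with the same sum and the
same factorial product has more elements equal to `1`. -/
def OneIncreasable (s : Multiset ℕ) : Prop :=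
  ∃ t : Multiset ℕ, (∀ i ∈ t, 0 < i) ∧ t.sum = s.sum ∧ factorialProd t = factorialProd s ∧
    s.count 1 < t.count 1

theorem OneIncreasable.mono {s t : Multiset ℕ} (hs : OneIncreasable s) (hst : s ≤ t)
    (ht : ∀ i ∈ t, 0 < i) : OneIncreasable t := by
  obtain ⟨s', hpos, hsum, hprod, hcount⟩ := hs
  obtain ⟨u, rfl⟩ := Multiset.le_iff_exists_add.1 hst
  refine ⟨s' + u, fun i hi => ?_, ?_, ?_, ?_⟩
  · exact (Multiset.mem_add.1 hi).elim (hpos i) fun hu => ht i (Multiset.mem_add.2 (Or.inr hu))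
  · rw [Multiset.sum_add, Multiset.sum_add, hsum]
  · rw [factorialProd_add, factorialProd_add, hprod]
  · rw [Multiset.count_add, Multiset.count_add]
    exact Nat.add_lt_add_right hcount _

theorem oneIncreasable_of_mem_partitionsContaining {n : ℕ} {s : Multiset ℕ}
    (hs : OneIncreasable s) {P : Nat.Partition n} (hP : P ∈ partitionsContaining n s) :
    OneIncreasable P.parts :=
  hs.mono (mem_partitionsContaining.1 hP) fun _ => P.parts_pos

theorem exists_not_oneIncreasable {n : ℕ} (P : Nat.Partition n) :
    ∃ Q : Nat.Partition n, ¬ OneIncreasable Q.parts ∧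
      factorialProd Q.parts = factorialProd P.parts := by
  obtain ⟨Q, hQ, hmax⟩ := exists_max_image
    ({Q | factorialProd Q.parts = factorialProd P.parts} : Finset (Nat.Partition n))
    (fun Q => Q.parts.count 1) ⟨P, by rw [mem_filter_univ]⟩
  rw [mem_filter_univ] at hQ
  refine ⟨Q, ?_, hQ⟩
  rintro ⟨t, hpos, hsum, hprod, hcount⟩
  let R : Nat.Partition n := ⟨t, hpos _, hsum.trans Q.parts_sum⟩
  exact (hmax R (by rw [mem_filter_univ, ← hQ, ← hprod])).not_gt hcount

theorem M_le_card_not_oneIncreasable (n : ℕ)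
    [DecidablePred fun P : Nat.Partition n => OneIncreasable P.parts] :
    M n ≤ #{P : Nat.Partition n | ¬ OneIncreasable P.parts} := by
  have hsubset : {v : ℕ | ∃ P : Nat.Partition n, factorialProd P.parts = v} ⊆
      (({P | ¬ OneIncreasable P.parts} : Finset (Nat.Partition n)).image
        fun P => factorialProd P.parts : Finset ℕ) := by
    rintro _ ⟨P, rfl⟩
    obtain ⟨Q, hQ, hQP⟩ := exists_not_oneIncreasable P
    exact mem_image.2 ⟨Q, (mem_filter_univ Q).2 hQ, hQP⟩
  calc M n ≤ _ := Set.ncard_le_ncard hsubset (finite_toSet _)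
    _ = _ := Set.ncard_coe_finset _
    _ ≤ _ := card_image_le

theorem M_add_card_le_numPartitions {n : ℕ} {S : Finset (Nat.Partition n)}
    (hS : ∀ P ∈ S, OneIncreasable P.parts) : M n + #S ≤ numPartitions n := by
  classical
  calc M n + #S
      ≤ #{P : Nat.Partition n | ¬ OneIncreasable P.parts} +
          #{P : Nat.Partition n | OneIncreasable P.parts} :=
        add_le_add (M_le_card_not_oneIncreasable n)
          (card_le_card fun P hP => (mem_filter_univ P).2 (hS P hP))
    _ = numPartitions n := by
        rw [add_comm, card_filter_add_card_filter_not, card_univ, numPartitions]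

theorem M_add_card_partitionsContaining_le {n : ℕ} {s t u : Multiset ℕ} (hs : OneIncreasable s)
    (ht : OneIncreasable t) (hu : OneIncreasable u) (hstu : s ≤ t ∪ u) :
    M n + #(partitionsContaining n s) + #(partitionsContaining n t) + #(partitionsContaining n u) ≤
      numPartitions n + #(partitionsContaining n (s ∪ t)) +
        #(partitionsContaining n (s ∪ u)) := by
  have hinter : partitionsContaining n t ∩ partitionsContaining n u ⊆ partitionsContaining n s :=
    partitionsContaining_inter.trans_subset (partitionsContaining_anti hstu)
  have hcard := card_union_add_card_inter_add_card_inter hinter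
  rw [partitionsContaining_inter, partitionsContaining_inter] at hcard
  have hM : M n + #(partitionsContaining n s ∪ partitionsContaining n t ∪
      partitionsContaining n u) ≤ numPartitions n := by
    refine M_add_card_le_numPartitions fun P hP => ?_
    simp only [mem_union] at hP
    rcases hP with (hP | hP) | hP
    · exact oneIncreasable_of_mem_partitionsContaining hs hP
    · exact oneIncreasable_of_mem_partitionsContaining ht hP
    · exact oneIncreasable_of_mem_partitionsContaining hu hP
  omega

theorem oneIncreasable_three_two_two : OneIncreasable {3, 2, 2} :=
  ⟨{4, 1, 1, 1}, by decide, by decide, by decide, by decide⟩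

theorem oneIncreasable_five_three : OneIncreasable {5, 3} :=
  ⟨{6, 1, 1}, by decide, by decide, by decide, by decide⟩

theorem oneIncreasable_six_two_two : OneIncreasable {6, 2, 2} :=
  ⟨{5, 4, 1}, by decide, by decide, by simp [factorialProd, Nat.factorial], by decide⟩

end OneIncreasable

/-- For every `n ≥ 13`,
`M(n) + p(n−7) + p(n−8) + p(n−10) ≤ p(n) + p(n−12) + p(n−13)`. -/
theorem M_upper_bound_six (n : ℕ) (hn : 13 ≤ n) :
    M n + numPartitions (n - 7) + numPartitions (n - 8) + numPartitions (n - 10) ≤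
      numPartitions n + numPartitions (n - 12) + numPartitions (n - 13) := by
  have hbound := M_add_card_partitionsContaining_le (n := n) oneIncreasable_three_two_two
    oneIncreasable_five_three oneIncreasable_six_two_two (by decide)
  have h322 : #(partitionsContaining n {3, 2, 2}) = numPartitions (n - 7) :=
    card_partitionsContaining (by decide) (by decide) (by omega)
  have h53 : #(partitionsContaining n {5, 3}) = numPartitions (n - 8) :=
    card_partitionsContaining (by decide) (by decide) (by omega)
  have h622 : #(partitionsContaining n {6, 2, 2}) = numPartitions (n - 10) :=
    card_partitionsContaining (by decide) (by decide) (by omega)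
  have h5322 : #(partitionsContaining n ({3, 2, 2} ∪ {5, 3})) = numPartitions (n - 12) :=
    card_partitionsContaining (by decide) (by decide) (by omega)
  have h6322 : #(partitionsContaining n ({3, 2, 2} ∪ {6, 2, 2})) = numPartitions (n - 13) :=
    card_partitionsContaining (by decide) (by decide) hn
  rwa [h322, h53, h622, h5322, h6322] at hbound
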